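/- Let G be a finite simple graph on vertex set {1,…,n} with at least one edge, K a field, and R = K[x_1,…,x_n]. Then the projective dimension of R/J(G) equals the Castelnuovo–Mumford regularity of the edge ideal I(G): pd(R/J(G)) = reg(I(G)). -/

import Mathlib

/-!
The Koszul complex of a monomial module is multigraded. For an ideal generated by squarefree
monomials, or the quotient by one, the homology in a multidegree that is not squarefree vanishes
because some variable acts as a cone point. In a squarefree multidegree `W` the complex is spanned
by the sets `S ⊆ W` whose complement `W \ S` indexes an active monomial, with the simplicial
boundary (`gradedBetti_iff_mfam`). Passing to complements turns this into a cochain complex, and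
over a field cohomology vanishes exactly when homology does (`NZ_compl_iff`).

Let `U` be the upward closed family of vertex sets containing an edge. For the edge ideal, the
numbers `j - i` with nonzero Betti number become the degrees `d` for which some restriction
`{T ∈ U : T ⊆ W}` has homology in cardinality `d`. For the cover ideal, a set is a non-cover iff its
complement is in `U`, and the homological degrees `i` with nonzero Betti number become those for
which some link `{T ∈ U : A ⊆ T}` has homology in cardinality `|A| + i`.

Both sets of degrees have the same maximum, namely the largest `i` for which some interval
`{T ∈ U : A ⊆ T ⊆ W}` has homology in cardinality `|A| + i` (`exists_max`). Splitting an interval by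
whether or not its members contain a vertex `v` gives a short exact sequence of complexes. In its
long exact sequence the groups above the maximal degree vanish, so a class of maximal degree can be
moved to an interval with smaller `A` (`exists_bot`) or larger `W` (`exists_top`), hence to one with
`A = ∅` or with `W` the whole vertex set.
-/


open MvPolynomial

/-- The Koszul differential on the Koszul complex of the variables `x_1,…,x_n` with
coefficients in an `R = K[x_1,…,x_n]`-module `M` (all homological degrees combined):
`(d f) T = ∑_{l ∉ T} (-1)^{#{m ∈ T : m < l}} x_l • f (T ∪ {l})`. -/
noncomputable def koszulD (K : Type*) [Field K] (n : ℕ) (M : Type*) [AddCommGroup M]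
    [Module (MvPolynomial (Fin n) K) M] [Module K M]
    [IsScalarTower K (MvPolynomial (Fin n) K) M] :
    (Finset (Fin n) → M) →ₗ[K] (Finset (Fin n) → M) where
  toFun f T := ∑ l ∈ Tᶜ,
    ((-1 : ℤ) ^ (T.filter (· < l)).card) • ((X l : MvPolynomial (Fin n) K) • f (insert l T))
  map_add' f g := by
    funext T
    simp [Pi.add_apply, smul_add, Finset.sum_add_distrib]
  map_smul' c f := by
    funext T
    simp only [Pi.smul_apply, RingHom.id_apply, Finset.smul_sum]
    refine Finset.sum_congr rfl fun l _ => ?_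
    rw [smul_comm (X l : MvPolynomial (Fin n) K) c (f (insert l T)),
      smul_comm ((-1 : ℤ) ^ (T.filter (· < l)).card) c]

/-- The piece of the Koszul complex in homological degree `i` and internal degree `j`,
where `V : ℤ → Submodule K M` records the graded pieces of `M` (the exterior generator
`e_S`, `|S| = i`, has internal degree `i`, so its coefficient lies in degree `j - i`). -/
noncomputable def koszulPart (K : Type*) [Field K] (n : ℕ) (M : Type*) [AddCommGroup M]
    [Module K M] (V : ℤ → Submodule K M) (i : ℕ) (j : ℤ) :
    Submodule K (Finset (Fin n) → M) where
  carrier := {f | ∀ S : Finset (Fin n), if S.card = i then f S ∈ V (j - i) else f S = 0}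
  add_mem' := by
    intro a b ha hb S
    have h1 := ha S
    have h2 := hb S
    by_cases h : S.card = i <;> simp_all [Pi.add_apply, Submodule.add_mem]
  zero_mem' := by
    intro S
    by_cases h : S.card = i <;> simp [h]
  smul_mem' := by
    intro c a ha S
    have h1 := ha S
    by_cases h : S.card = i <;> simp_all [Pi.smul_apply, Submodule.smul_mem]

/-- The graded Betti number `β_{i,j}(M) = dim_K Tor_i(M, K)_j` — the number of degree-`j`
generators of the `i`-th module in the minimal graded free resolution of the graded module
`M` with graded pieces `V` — computed as the dimension of the degree-`j` part of the `i`-th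
Koszul homology of `M`. -/
noncomputable def gradedBetti (K : Type*) [Field K] (n : ℕ) (M : Type*) [AddCommGroup M]
    [Module (MvPolynomial (Fin n) K) M] [Module K M]
    [IsScalarTower K (MvPolynomial (Fin n) K) M]
    (V : ℤ → Submodule K M) (i : ℕ) (j : ℤ) : ℕ :=
  let Z : Submodule K (Finset (Fin n) → M) :=
    LinearMap.ker (koszulD K n M) ⊓ koszulPart K n M V i j
  let B : Submodule K (Finset (Fin n) → M) :=
    Submodule.map (koszulD K n M) (koszulPart K n M V (i + 1) j)
  Module.finrank K (Z ⧸ (B.comap Z.subtype))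

/-- The degree-`j` graded piece of `R/J`, for homogeneous `J`. -/
noncomputable def quotGrading (K : Type*) [Field K] (n : ℕ)
    (J : Ideal (MvPolynomial (Fin n) K)) (j : ℤ) :
    Submodule K ((MvPolynomial (Fin n) K) ⧸ J) :=
  if 0 ≤ j then
    Submodule.map ((J.mkQ).restrictScalars K) (homogeneousSubmodule (Fin n) K j.toNat)
  else ⊥

/-- The degree-`j` graded piece of a homogeneous ideal `I ⊆ R`. -/
noncomputable def idealGrading (K : Type*) [Field K] (n : ℕ)
    (I : Ideal (MvPolynomial (Fin n) K)) (j : ℤ) :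
    Submodule K (MvPolynomial (Fin n) K) :=
  if 0 ≤ j then (Submodule.restrictScalars K I) ⊓ homogeneousSubmodule (Fin n) K j.toNat
  else ⊥

/-- The graded Betti numbers `β_{i,j}(R/J)`. -/
noncomputable def bettiQuot (K : Type*) [Field K] (n : ℕ)
    (J : Ideal (MvPolynomial (Fin n) K)) (i : ℕ) (j : ℤ) : ℕ :=
  gradedBetti K n ((MvPolynomial (Fin n) K) ⧸ J) (quotGrading K n J) i j

/-- The graded Betti numbers `β_{i,j}(I)` of a homogeneous ideal `I ⊆ R`. -/
noncomputable def bettiIdeal (K : Type*) [Field K] (n : ℕ)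
    (I : Ideal (MvPolynomial (Fin n) K)) (i : ℕ) (j : ℤ) : ℕ :=
  gradedBetti K n (MvPolynomial (Fin n) K) (idealGrading K n I) i j

/-- The projective dimension of `R/J`: the length of its minimal graded free resolution,
i.e. the largest homological degree `i` with `β_{i,j}(R/J) ≠ 0` for some `j`. -/
noncomputable def pdQuot (K : Type*) [Field K] (n : ℕ)
    (J : Ideal (MvPolynomial (Fin n) K)) : ℕ :=
  sSup {i : ℕ | ∃ j : ℤ, bettiQuot K n J i j ≠ 0}

/-- The Castelnuovo–Mumford regularity of a homogeneous ideal `I ⊆ R`: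
`reg(I) = max{ j - i : β_{i,j}(I) ≠ 0 }`. -/
noncomputable def regIdeal (K : Type*) [Field K] (n : ℕ)
    (I : Ideal (MvPolynomial (Fin n) K)) : ℤ :=
  sSup {d : ℤ | ∃ (i : ℕ) (j : ℤ), bettiIdeal K n I i j ≠ 0 ∧ d = j - (i : ℤ)}

/-- The edge ideal `I(G) = (x_u x_v : {u,v} ∈ E(G)) ⊆ K[x_1,…,x_n]`. -/
noncomputable def edgeIdeal (K : Type*) [Field K] {n : ℕ} (G : SimpleGraph (Fin n)) :
    Ideal (MvPolynomial (Fin n) K) :=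
  Ideal.span {p | ∃ u v : Fin n, G.Adj u v ∧ p = X u * X v}

/-- The cover ideal `J(G) = ⋂_{{u,v} ∈ E(G)} (x_u, x_v) ⊆ K[x_1,…,x_n]`. -/
noncomputable def coverIdeal (K : Type*) [Field K] {n : ℕ} (G : SimpleGraph (Fin n)) :
    Ideal (MvPolynomial (Fin n) K) :=
  ⨅ (u : Fin n) (v : Fin n) (_ : G.Adj u v), Ideal.span {X u, X v}

/-! ### Simplicial chains on families of finite sets -/

/-- The incidence sign `(-1)^{#{m ∈ T : m < l}}`. -/
def ksgn (K : Type*) [Field K] {n : ℕ} (T : Finset (Fin n)) (l : Fin n) : K :=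
  (-1) ^ (T.filter (· < l)).card

lemma ksgn_mul_self (K : Type*) [Field K] {n : ℕ} (T : Finset (Fin n)) (l : Fin n) :
    ksgn K T l * ksgn K T l = 1 := by
  simp [ksgn, ← mul_pow]

lemma ksgn_insert (K : Type*) [Field K] {n : ℕ} {T : Finset (Fin n)} {l : Fin n} (hl : l ∉ T)
    (m : Fin n) : ksgn K (insert l T) m = ksgn K T m * (if l < m then -1 else 1) := by
  unfold ksgn
  rw [Finset.filter_insert]
  split_ifs with h
  · rw [Finset.card_insert_of_notMem (by simp [hl]), pow_succ]
  · simp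

lemma ksgn_anticomm (K : Type*) [Field K] {n : ℕ} {T : Finset (Fin n)} {l m : Fin n}
    (hl : l ∉ T) (hm : m ∉ T) (hlm : l ≠ m) :
    ksgn K T l * ksgn K (insert l T) m = -(ksgn K T m * ksgn K (insert m T) l) := by
  rw [ksgn_insert K hl, ksgn_insert K hm]
  rcases lt_or_gt_of_ne hlm with h | h
  · simp [h, not_lt_of_gt h]; ring
  · simp [h, not_lt_of_gt h]; ring

/-- The simplicial boundary of a `K`-valued function on finite sets, the function `z` standing
for the chain `∑ z(T) e_T`. -/
def bdry (K : Type*) [Field K] {n : ℕ} : (Finset (Fin n) → K) →ₗ[K] (Finset (Fin n) → K) where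
  toFun z T := ∑ l ∈ Tᶜ, ksgn K T l * z (insert l T)
  map_add' f g := by
    funext T
    simp [mul_add, Finset.sum_add_distrib]
  map_smul' c f := by
    funext T
    simp only [Pi.smul_apply, RingHom.id_apply, smul_eq_mul, Finset.mul_sum]
    exact Finset.sum_congr rfl fun l _ => by ring

lemma bdry_apply {K : Type*} [Field K] {n : ℕ} (z : Finset (Fin n) → K) (T : Finset (Fin n)) :
    bdry K z T = ∑ l ∈ Tᶜ, ksgn K T l * z (insert l T) := rfl

lemma bdry_bdry {K : Type*} [Field K] {n : ℕ} (z : Finset (Fin n) → K) (T : Finset (Fin n)) :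
    bdry K (bdry K z) T = 0 := by
  simp only [bdry_apply, Finset.mul_sum]
  rw [Finset.sum_sigma']
  refine Finset.sum_involution (fun p _ => ⟨p.2, p.1⟩) ?_ ?_ ?_ ?_
  · rintro ⟨l, m⟩ h
    simp only [Finset.mem_sigma, Finset.mem_compl, Finset.mem_insert, not_or] at h
    rw [← mul_assoc, ← mul_assoc, ksgn_anticomm K h.1 h.2.2 (Ne.symm h.2.1),
      Finset.insert_comm m l T]
    ring
  · rintro ⟨l, m⟩ h _ h'
    simp only [Finset.mem_sigma, Finset.mem_compl, Finset.mem_insert, not_or] at h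
    simp only [Sigma.mk.injEq] at h'
    exact h.2.1 h'.1
  · rintro ⟨l, m⟩ h
    simp only [Finset.mem_sigma, Finset.mem_compl, Finset.mem_insert, not_or] at h ⊢
    exact ⟨h.2.2, fun e => h.2.1 e.symm, h.1⟩
  · rintro ⟨l, m⟩ h
    rfl

/-- `z` is a chain on the members of the family `P` with exactly `k` elements. -/
def SuppIn {K : Type*} [Field K] {n : ℕ} (P : Finset (Fin n) → Prop) (k : ℕ)
    (z : Finset (Fin n) → K) : Prop :=
  ∀ T, z T ≠ 0 → P T ∧ T.card = k

/-- The complex spanned by the sets in `P`, with the simplicial boundary truncated to `P`, has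
nonzero homology in degree `k`. Chains are graded by cardinality of sets, not by dimension. -/
def NZ (K : Type*) [Field K] {n : ℕ} (P : Finset (Fin n) → Prop) (k : ℕ) : Prop :=
  ∃ z : Finset (Fin n) → K, SuppIn P k z ∧ (∀ T, P T → bdry K z T = 0) ∧
    ∀ w, SuppIn P (k + 1) w → ∃ T, P T ∧ bdry K w T ≠ z T

lemma NZ.exists_mem {K : Type*} [Field K] {n : ℕ} {P : Finset (Fin n) → Prop} {k : ℕ}
    (h : NZ K P k) : ∃ T, P T ∧ T.card = k := by
  obtain ⟨z, hz, -, hb⟩ := h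
  by_contra! hne
  obtain ⟨T, hT, h⟩ := hb 0 (by intro T h; simp at h)
  by_cases hzT : z T = 0
  · simp [hzT] at h
  · exact hne T (hz T hzT).1 (hz T hzT).2

lemma NZ.congr {K : Type*} [Field K] {n : ℕ} {P P' : Finset (Fin n) → Prop} {k : ℕ}
    (h : NZ K P k) (hP : ∀ T, P T ↔ P' T) : NZ K P' k := by
  have : P = P' := funext fun T => propext (hP T)
  exact this ▸ h

open Classical in
/-- The truncation of a function to the family `P`. -/
noncomputable def res {K : Type*} [Field K] {n : ℕ} (P : Finset (Fin n) → Prop)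
    (z : Finset (Fin n) → K) : Finset (Fin n) → K := fun T => if P T then z T else 0

lemma bdry_supp {K : Type*} [Field K] {n : ℕ} {P : Finset (Fin n) → Prop} {k : ℕ}
    {z : Finset (Fin n) → K} (hz : SuppIn P k z) {T : Finset (Fin n)} (h : bdry K z T ≠ 0) :
    ∃ l, l ∉ T ∧ P (insert l T) ∧ T.card + 1 = k := by
  obtain ⟨l, hl, hne⟩ := Finset.exists_ne_zero_of_sum_ne_zero h
  have hl' : l ∉ T := by simpa using hl
  have := hz _ (right_ne_zero_of_mul hne)
  exact ⟨l, hl', this.1, by rw [← this.2, Finset.card_insert_of_notMem hl']⟩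

/-- On a convex family the truncated boundary squares to zero. -/
lemma bdry_res_bdry {K : Type*} [Field K] {n : ℕ} {P : Finset (Fin n) → Prop}
    (hP : ∀ S T U, P S → P U → S ⊆ T → T ⊆ U → P T) {k : ℕ}
    {z : Finset (Fin n) → K} (hz : SuppIn P k z) {T : Finset (Fin n)} (hT : P T) :
    bdry K (res P (bdry K z)) T = 0 := by
  rw [← bdry_bdry z T, bdry_apply, bdry_apply]
  refine Finset.sum_congr rfl fun l _ => ?_
  congr 1
  unfold res
  split_ifs with h
  · rfl
  · by_contra hne
    obtain ⟨m, _, hm, _⟩ := bdry_supp hz (Ne.symm hne)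
    exact h (hP _ _ _ hT hm (Finset.subset_insert _ _) (Finset.subset_insert _ _))

lemma res_bdry_supp {K : Type*} [Field K] {n : ℕ} {P : Finset (Fin n) → Prop} {k : ℕ}
    {z : Finset (Fin n) → K} (hz : SuppIn P (k + 1) z) : SuppIn P k (res P (bdry K z)) := by
  intro T h
  unfold res at h
  split_ifs at h with hT
  · obtain ⟨l, _, _, hc⟩ := bdry_supp hz h
    exact ⟨hT, by omega⟩
  · simp at h

lemma SuppIn.sub {K : Type*} [Field K] {n : ℕ} {P : Finset (Fin n) → Prop} {k : ℕ}
    {z w : Finset (Fin n) → K} (hz : SuppIn P k z) (hw : SuppIn P k w) : SuppIn P k (z - w) := by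
  intro T h
  by_cases h1 : z T = 0
  · by_cases h2 : w T = 0
    · simp [h1, h2] at h
    · exact hw T h2
  · exact hz T h1

lemma SuppIn.mono {K : Type*} [Field K] {n : ℕ} {P P' : Finset (Fin n) → Prop} {k : ℕ}
    {z : Finset (Fin n) → K} (hz : SuppIn P k z) (h : ∀ T, P T → P' T) : SuppIn P' k z :=
  fun T hT => ⟨h T (hz T hT).1, (hz T hT).2⟩

lemma SuppIn.eq_zero {K : Type*} [Field K] {n : ℕ} {P : Finset (Fin n) → Prop} {k : ℕ}
    {z : Finset (Fin n) → K} (hz : SuppIn P k z) {T : Finset (Fin n)} (h : ¬ P T) : z T = 0 := by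
  by_contra hne
  exact h (hz T hne).1

lemma SuppIn.res {K : Type*} [Field K] {n : ℕ} {P P' : Finset (Fin n) → Prop} {k : ℕ}
    {z : Finset (Fin n) → K} (hz : SuppIn P k z) :
    SuppIn (fun T => P T ∧ P' T) k (res P' z) := by
  intro T h
  unfold _root_.res at h
  split_ifs at h with hT
  · exact ⟨⟨(hz T h).1, hT⟩, (hz T h).2⟩
  · simp at h

/-- The members of a family containing `v` form a quotient complex: truncating a chain to them
does not change the boundary there. -/
lemma bdry_res_mem {K : Type*} [Field K] {n : ℕ} (z : Finset (Fin n) → K) {v : Fin n}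
    {T : Finset (Fin n)} (hv : v ∈ T) : bdry K (res (fun T => v ∈ T) z) T = bdry K z T := by
  simp only [bdry_apply]
  refine Finset.sum_congr rfl fun l _ => ?_
  simp [res, hv]

/-- The members of a family not containing `v` form a subcomplex. -/
lemma bdry_eq_zero_of_mem {K : Type*} [Field K] {n : ℕ} {P : Finset (Fin n) → Prop}
    {k : ℕ} {v : Fin n} {z : Finset (Fin n) → K} (hz : SuppIn (fun T => P T ∧ v ∉ T) k z)
    {T : Finset (Fin n)} (hv : v ∈ T) : bdry K z T = 0 := by
  by_contra h
  obtain ⟨l, _, h, _⟩ := bdry_supp hz h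
  exact h.2 (Finset.mem_insert_of_mem hv)

/-- Exactness of `H(P) → H(v ∈ T) → H(v ∉ T)`, the last map being the connecting one. -/
lemma NZ_connect {K : Type*} [Field K] {n : ℕ} {P : Finset (Fin n) → Prop}
    (hP : ∀ S T U, P S → P U → S ⊆ T → T ⊆ U → P T) (v : Fin n) {k : ℕ}
    (h1 : NZ K (fun T => P T ∧ v ∈ T) (k + 1)) (h : ¬ NZ K P (k + 1)) :
    NZ K (fun T => P T ∧ v ∉ T) k := by
  obtain ⟨z, hz, hc, hb⟩ := h1
  have hzP : SuppIn P (k + 1) z := hz.mono fun T h => h.1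
  have hy : SuppIn P k (res P (bdry K z)) := res_bdry_supp hzP
  refine ⟨res P (bdry K z), ?_, fun T hT => bdry_res_bdry hP hzP hT.1, ?_⟩
  · intro T hT
    refine ⟨⟨(hy T hT).1, fun hv => hT ?_⟩, (hy T hT).2⟩
    have := hc T ⟨(hy T hT).1, hv⟩
    simp [res, this]
  · intro w hw
    by_contra! hcon
    apply h
    refine ⟨z - w, hzP.sub (hw.mono fun T h => h.1), ?_, ?_⟩
    · intro T hT
      rw [map_sub, Pi.sub_apply]
      by_cases hv : v ∈ T
      · rw [hc T ⟨hT, hv⟩, bdry_eq_zero_of_mem hw hv, sub_zero]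
      · rw [hcon T ⟨hT, hv⟩]
        simp [res, hT]
    · intro u hu
      by_contra! hcon2
      obtain ⟨T, hT, hne⟩ := hb (res (fun T => v ∈ T) u) hu.res
      apply hne
      rw [bdry_res_mem u hT.2, hcon2 T hT.1, Pi.sub_apply,
        hw.eq_zero (fun h => h.2 hT.2), sub_zero]

/-- Exactness of `H(v ∈ T) → H(v ∉ T) → H(P)`, the first map being the connecting one. -/
lemma NZ_extend {K : Type*} [Field K] {n : ℕ} {P : Finset (Fin n) → Prop}
    (hP : ∀ S T U, P S → P U → S ⊆ T → T ⊆ U → P T) (v : Fin n) {k : ℕ}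
    (h0 : NZ K (fun T => P T ∧ v ∉ T) k) :
    NZ K P k ∨ NZ K (fun T => P T ∧ v ∈ T) (k + 1) := by
  obtain ⟨z, hz, hc, hb⟩ := h0
  by_contra! hcon
  apply hcon.1
  refine ⟨z, hz.mono fun T h => h.1, ?_, ?_⟩
  · intro T hT
    by_cases hv : v ∈ T
    · exact bdry_eq_zero_of_mem hz hv
    · exact hc T ⟨hT, hv⟩
  · intro u hu
    by_contra! hu2
    apply hcon.2
    refine ⟨res (fun T => v ∈ T) u, hu.res, ?_, ?_⟩
    · intro T hT
      rw [bdry_res_mem u hT.2, hu2 T hT.1, hz.eq_zero (fun h => h.2 hT.2)]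
    · intro w hw
      by_contra! hw2
      have hwP : SuppIn P (k + 1 + 1) w := hw.mono fun T h => h.1
      have hs : SuppIn P (k + 1) (u - res P (bdry K w)) := hu.sub (res_bdry_supp hwP)
      obtain ⟨T, hT, hne⟩ := hb (u - res P (bdry K w)) (by
        intro T hT
        refine ⟨⟨(hs T hT).1, fun hv => hT ?_⟩, (hs T hT).2⟩
        have h1 := hw2 T ⟨(hs T hT).1, hv⟩
        simp only [Pi.sub_apply, res, (hs T hT).1, if_true, h1, hv, sub_self])
      apply hne
      rw [map_sub, Pi.sub_apply, bdry_res_bdry hP hwP hT.1, sub_zero, hu2 T hT.1]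

/-! ### Restrictions and links of an upward closed family -/

lemma interval_convex {n : ℕ} {U : Finset (Fin n) → Prop} (hU : ∀ S T, U S → S ⊆ T → U T)
    (A W : Finset (Fin n)) : ∀ S T S' : Finset (Fin n),
      (A ⊆ S ∧ S ⊆ W ∧ U S) → (A ⊆ S' ∧ S' ⊆ W ∧ U S') → S ⊆ T → T ⊆ S' →
      (A ⊆ T ∧ T ⊆ W ∧ U T) :=
  fun _ _ _ h h' h1 h2 => ⟨h.1.trans h1, h2.trans h'.2.1, hU _ _ h.2.2 h1⟩

/-- Measure degrees on an interval `[A, W]` of `U` relative to the bottom `A`. If no interval has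
homology in degree `i + 1`, then homology in degree `i` on some interval forces homology in degree
`i` on an interval with bottom `∅`. -/
lemma exists_bot {K : Type*} [Field K] {n : ℕ} {U : Finset (Fin n) → Prop}
    (hU : ∀ S T, U S → S ⊆ T → U T) {i : ℕ}
    (hmax : ∀ A W, ¬ NZ K (fun T => A ⊆ T ∧ T ⊆ W ∧ U T) (A.card + (i + 1)))
    (A : Finset (Fin n)) : ∀ W, NZ K (fun T => A ⊆ T ∧ T ⊆ W ∧ U T) (A.card + i) →
      ∃ W', NZ K (fun T => T ⊆ W' ∧ U T) i := by
  induction A using Finset.induction_on with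
  | empty => exact fun W h => ⟨W, by simpa using h⟩
  | insert v A hv ih =>
    intro W h
    refine ih (W.erase v) ?_
    rw [Finset.card_insert_of_notMem hv] at h
    refine (NZ_connect (interval_convex hU A W) v (k := A.card + i) ?_ ?_).congr fun T => ?_
    · rw [show A.card + i + 1 = A.card + 1 + i by omega]
      refine h.congr fun T => ?_
      rw [Finset.insert_subset_iff]
      tauto
    · exact hmax A W
    · rw [Finset.subset_erase]
      tauto

/-- Homology in degree `i`, relative to the bottom, on some interval forces homology in the same
relative degree on an interval with top the whole vertex set. -/
lemma exists_top {K : Type*} [Field K] {n : ℕ} {U : Finset (Fin n) → Prop}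
    (hU : ∀ S T, U S → S ⊆ T → U T) {i : ℕ} (c : ℕ) :
    ∀ A W : Finset (Fin n), Wᶜ.card = c → NZ K (fun T => A ⊆ T ∧ T ⊆ W ∧ U T) (A.card + i) →
      ∃ A' : Finset (Fin n), NZ K (fun T => A' ⊆ T ∧ U T) (A'.card + i) := by
  induction c with
  | zero =>
    intro A W hW h
    have : W = Finset.univ := by simpa using hW
    exact ⟨A, by simpa [this] using h⟩
  | succ c ih =>
    intro A W hW h
    obtain ⟨v, hv⟩ : Wᶜ.Nonempty := Finset.card_pos.1 (by omega)
    have hvW : v ∉ W := by simpa using hv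
    obtain ⟨T, hT, -⟩ := h.exists_mem
    have hvA : v ∉ A := fun h => hvW (hT.2.1 (hT.1 h))
    have hc : (insert v W)ᶜ.card = c := by
      rw [Finset.compl_insert, Finset.card_erase_of_mem hv]; omega
    rcases NZ_extend (interval_convex hU A (insert v W)) v (h.congr fun T => by
      have : T ⊆ W ↔ T ⊆ insert v W ∧ v ∉ T := by
        conv_lhs => rw [← Finset.erase_insert hvW, Finset.subset_erase]
      rw [this]; tauto) with h' | h'
    · exact ih A _ hc h'
    · refine ih (insert v A) _ hc ?_
      rw [Finset.card_insert_of_notMem hvA, show A.card + 1 + i = A.card + i + 1 by omega]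
      refine h'.congr fun T => ?_
      rw [Finset.insert_subset_iff]
      tauto

/-- The combinatorial core: restrictions (intervals `[∅, W]`) and links (intervals `[A, V]`) of
an upward closed family have the same top homological degree. -/
lemma exists_max {K : Type*} [Field K] {n : ℕ} {U : Finset (Fin n) → Prop}
    (hU : ∀ S T, U S → S ⊆ T → U T) (hne : ∃ S, U S) :
    ∃ m : ℕ, IsGreatest {i | ∃ A : Finset (Fin n), NZ K (fun T => A ⊆ T ∧ U T) (A.card + i)} m ∧
      IsGreatest {i | ∃ W : Finset (Fin n), NZ K (fun T => T ⊆ W ∧ U T) i} m := by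
  classical
  let E : ℕ → Prop := fun i => ∃ A W, NZ K (fun T => A ⊆ T ∧ T ⊆ W ∧ U T) (A.card + i)
  have hbound : ∀ i, E i → i ≤ n := by
    rintro i ⟨A, W, h⟩
    obtain ⟨T, -, hT⟩ := h.exists_mem
    have := T.card_le_univ
    simp at this
    omega
  have h0 : E 0 := by
    obtain ⟨S, hS⟩ := hne
    refine ⟨S, S, fun T => if T = S then 1 else 0, ?_, ?_, ?_⟩
    · intro T hT
      have : T = S := by by_contra h; simp [h] at hT
      subst this
      exact ⟨⟨subset_rfl, subset_rfl, hS⟩, rfl⟩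
    · intro T hT
      obtain rfl : S = T := hT.1.antisymm hT.2.1
      rw [bdry_apply]
      refine Finset.sum_eq_zero fun l hl => ?_
      have : l ∉ S := by simpa using hl
      simp [this]
    · intro w hw
      refine ⟨S, ⟨subset_rfl, subset_rfl, hS⟩, ?_⟩
      rw [show bdry K w S = 0 by
        by_contra h
        obtain ⟨l, hl, h, _⟩ := bdry_supp hw h
        exact hl (h.2.1 (Finset.mem_insert_self _ _))]
      simp
  obtain ⟨m, hm, hmax⟩ : ∃ m, E m ∧ ∀ i, E i → i ≤ m :=
    ⟨Nat.findGreatest E n, Nat.findGreatest_spec (Nat.zero_le n) h0,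
      fun i hi => Nat.le_findGreatest (hbound i hi) hi⟩
  obtain ⟨A, W, hAW⟩ := hm
  refine ⟨m, ⟨exists_top hU _ A W rfl hAW, ?_⟩, ⟨exists_bot hU ?_ A W hAW, ?_⟩⟩
  · rintro i ⟨A, h⟩
    exact hmax i ⟨A, Finset.univ, by simpa using h⟩
  · intro A W h
    have := hmax (m + 1) ⟨A, W, h⟩
    omega
  · rintro i ⟨W, h⟩
    exact hmax i ⟨∅, W, by simpa using h⟩

/-! ### Complementation duality -/

lemma ksgn_sdiff (K : Type*) [Field K] {n : ℕ} {T W : Finset (Fin n)} (h : T ⊆ W) (l : Fin n) :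
    ksgn K T l * ksgn K (W \ T) l = ksgn K W l := by
  unfold ksgn
  rw [← pow_add, ← Finset.card_union_of_disjoint, ← Finset.filter_union,
    Finset.union_sdiff_of_subset h]
  exact Finset.disjoint_filter_filter Finset.disjoint_sdiff

lemma ksgn_erase (K : Type*) [Field K] {n : ℕ} (T : Finset (Fin n)) (l : Fin n) :
    ksgn K (T.erase l) l = ksgn K T l := by
  unfold ksgn
  congr 2
  ext m
  simp only [Finset.mem_filter, Finset.mem_erase]
  exact ⟨fun h => ⟨h.1.2, h.2⟩, fun h => ⟨⟨h.2.ne, h.1⟩, h.2⟩⟩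

lemma sum_mem_eq_sum_insert {K : Type*} [Field K] {n : ℕ} (F : Finset (Fin n) → Fin n → K) :
    ∑ S, ∑ l ∈ S, F S l = ∑ S, ∑ l ∈ Sᶜ, F (insert l S) l := by
  rw [Finset.sum_sigma', Finset.sum_sigma']
  refine Finset.sum_bij' (fun p _ => ⟨p.1.erase p.2, p.2⟩) (fun p _ => ⟨insert p.2 p.1, p.2⟩)
    ?_ ?_ ?_ ?_ ?_
  · rintro ⟨S, l⟩ h
    simp
  · rintro ⟨S, l⟩ h
    simp
  · rintro ⟨S, l⟩ h
    simp only [Finset.mem_sigma, Finset.mem_univ, true_and] at h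
    simp [Finset.insert_erase h]
  · rintro ⟨S, l⟩ h
    simp only [Finset.mem_sigma, Finset.mem_univ, true_and, Finset.mem_compl] at h
    simp [Finset.erase_insert h]
  · rintro ⟨S, l⟩ h
    simp only [Finset.mem_sigma, Finset.mem_univ, true_and] at h
    simp [Finset.insert_erase h]

open Classical in
lemma res_bdry_single {K : Type*} [Field K] {n : ℕ} (Q : Finset (Fin n) → Prop)
    (R : Finset (Fin n)) : res Q (bdry K (Pi.single R 1)) =
      ∑ l ∈ R, (if Q (R.erase l) then ksgn K R l else 0) •
        (Pi.single (R.erase l) 1 : Finset (Fin n) → K) := by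
  funext S
  rw [Finset.sum_apply]
  unfold res
  simp only [bdry_apply, Pi.smul_apply, smul_eq_mul, Pi.single_apply, mul_ite, mul_one, mul_zero]
  rw [← Finset.sum_filter, ← Finset.sum_filter]
  have hset : Finset.filter (fun l => insert l S = R) Sᶜ = R.filter (fun l => S = R.erase l) := by
    ext l
    simp only [Finset.mem_filter, Finset.mem_compl]
    constructor
    · rintro ⟨h, rfl⟩
      exact ⟨Finset.mem_insert_self _ _, (Finset.erase_insert h).symm⟩
    · rintro ⟨h, rfl⟩
      exact ⟨Finset.notMem_erase _ _, Finset.insert_erase h⟩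
  rw [hset]
  split_ifs with h
  · refine Finset.sum_congr rfl fun l hl => ?_
    rw [← (Finset.mem_filter.1 hl).2, if_pos h, ← ksgn_erase K R, ← (Finset.mem_filter.1 hl).2]
  · refine (Finset.sum_eq_zero fun l hl => ?_).symm
    rw [← (Finset.mem_filter.1 hl).2, if_neg h]

/-- Complementation in `W` turns boundaries into coboundaries, up to the sign
`η T = ∏_{m ∈ T} (-1)^{#{w ∈ W : w < m}}`, and over a field homology and cohomology vanish
together: a functional detecting a nonzero homology class of `Q` is a cycle for `P` that is not a
boundary. -/
lemma NZ.compl {K : Type*} [Field K] {n : ℕ} {P Q : Finset (Fin n) → Prop} (W : Finset (Fin n))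
    (hP : ∀ T, P T → T ⊆ W) (hQ : ∀ S, Q S ↔ S ⊆ W ∧ P (W \ S)) {i k : ℕ}
    (hik : i + k = W.card) (h : NZ K Q i) : NZ K P k := by
  classical
  obtain ⟨z, hz, hc, hb⟩ := h
  let B : Submodule K (Finset (Fin n) → K) :=
    { carrier := {b | ∃ w, SuppIn Q (i + 1) w ∧ b = res Q (bdry K w)}
      add_mem' := by
        rintro _ _ ⟨w, hw, rfl⟩ ⟨w', hw', rfl⟩
        refine ⟨w + w', fun T h => ?_, ?_⟩
        · by_cases h1 : w T = 0
          · by_cases h2 : w' T = 0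
            · simp [h1, h2] at h
            · exact hw' T h2
          · exact hw T h1
        · funext T
          by_cases hT : Q T <;> simp [res, hT]
      zero_mem' := ⟨0, fun T h => by simp at h, by funext T; simp [res]⟩
      smul_mem' := by
        rintro c _ ⟨w, hw, rfl⟩
        refine ⟨c • w, fun T h => hw T fun h' => h (by simp [h']), ?_⟩
        funext T
        by_cases hT : Q T <;> simp [res, hT] }
  have hzB : z ∉ B := by
    rintro ⟨w, hw, hzw⟩
    obtain ⟨T, hT, hne⟩ := hb w hw
    exact hne (by rw [hzw]; simp [res, hT])
  obtain ⟨φ, hφz, hφB⟩ := Submodule.exists_dual_map_eq_bot_of_notMem hzB inferInstance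
  have hφ : ∀ w, SuppIn Q (i + 1) w → φ (res Q (bdry K w)) = 0 := by
    intro w hw
    have : φ (res Q (bdry K w)) ∈ B.map φ := Submodule.mem_map_of_mem ⟨w, hw, rfl⟩
    exact (Submodule.mem_bot K).1 (hφB.le this)
  let e : Finset (Fin n) → (Finset (Fin n) → K) := fun S => Pi.single S 1
  let η : Finset (Fin n) → K := fun T => ∏ m ∈ T, ksgn K W m
  have hη : ∀ T, η T * η T = 1 := by
    intro T
    rw [← Finset.prod_mul_distrib]
    exact Finset.prod_eq_one fun m _ => ksgn_mul_self K W m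
  have hηi : ∀ T l, l ∉ T → η (insert l T) = ksgn K W l * η T := fun T l hl =>
    Finset.prod_insert hl
  let y : Finset (Fin n) → K := fun T => if P T ∧ T.card = k then η T * φ (e (W \ T)) else 0
  have hy : SuppIn P k y := by
    intro T hT
    by_contra hcon
    exact hT (if_neg hcon)
  refine ⟨y, hy, ?_, ?_⟩
  · intro T hT
    by_cases hTk : T.card + 1 = k
    · have hcard : (W \ T).card = i + 1 := by
        have := Finset.card_sdiff_add_card_eq_card (hP T hT)
        omega
      have hsupp : SuppIn Q (i + 1) (e (W \ T)) := by
        intro S hS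
        have : S = W \ T := by
          by_contra h
          exact hS (Pi.single_eq_of_ne h _)
        subst this
        refine ⟨(hQ _).2 ⟨Finset.sdiff_subset, ?_⟩, hcard⟩
        rwa [Finset.sdiff_sdiff_eq_self (hP T hT)]
      have h0 := hφ _ hsupp
      rw [res_bdry_single, map_sum] at h0
      have : bdry K y T = η T * ∑ l ∈ W \ T, φ ((if Q ((W \ T).erase l) then ksgn K (W \ T) l
          else 0) • (Pi.single ((W \ T).erase l) 1 : Finset (Fin n) → K)) := by
        rw [bdry_apply, Finset.mul_sum]
        symm
        refine Finset.sum_subset_zero_on_sdiff ?_ ?_ ?_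
        · intro l hl
          simpa using (Finset.mem_sdiff.1 hl).2
        · intro l hl
          simp only [Finset.mem_sdiff, Finset.mem_compl, not_and, not_not] at hl
          rw [hy.eq_zero, mul_zero]
          intro h
          exact hl.1 (hl.2 (hP _ h (Finset.mem_insert_self _ _)))
        · intro l hl
          obtain ⟨hlW, hlT⟩ := Finset.mem_sdiff.1 hl
          have hset : (W \ T).erase l = W \ insert l T := by
            rw [Finset.sdiff_insert]
          have hins : insert l T ⊆ W := Finset.insert_subset hlW (hP T hT)
          have hiff : Q (W \ insert l T) ↔ P (insert l T) := by
            rw [hQ, Finset.sdiff_sdiff_eq_self hins]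
            exact and_iff_right Finset.sdiff_subset
          rw [hset, map_smul, smul_eq_mul]
          by_cases hp : P (insert l T)
          · have hyv : y (insert l T) = η (insert l T) * φ (e (W \ insert l T)) :=
              if_pos ⟨hp, by rw [Finset.card_insert_of_notMem hlT, hTk]⟩
            rw [if_pos (hiff.2 hp), hyv, hηi T l hlT, ← ksgn_sdiff K (hP T hT) l]
            linear_combination (-(ksgn K (W \ T) l * η T * φ (e (W \ insert l T)))) *
              ksgn_mul_self K T l
          · rw [if_neg fun h => hp (hiff.1 h), hy.eq_zero hp]
            simp
      rw [this, h0, mul_zero]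
    · by_contra h
      obtain ⟨_, _, _, h⟩ := bdry_supp hy h
      exact hTk h
  · intro u hu
    by_contra! hcon
    apply hφz
    -- `φ z` is the pairing of `y = ∂u` with the complement of `z`; moving the boundary over to `z`
    -- gives zero.
    calc φ z = ∑ S, z S * φ (e S) := by
            rw [LinearMap.pi_apply_eq_sum_univ φ z]
            refine Finset.sum_congr rfl fun S _ => ?_
            rw [smul_eq_mul]
            congr 2
            funext T
            simp [e, Pi.single_apply, eq_comm]
      _ = ∑ S, ∑ l ∈ S, z S * η (W \ S) * ksgn K (W \ S) l * u (insert l (W \ S)) := by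
            refine Finset.sum_congr rfl fun S _ => ?_
            by_cases hzS : z S = 0
            · simp [hzS]
            obtain ⟨hQS, hSc⟩ := hz S hzS
            obtain ⟨hSW, hPS⟩ := (hQ S).1 hQS
            have hck : (W \ S).card = k := by
              have := Finset.card_sdiff_add_card_eq_card hSW
              omega
            have h1 : y (W \ S) = η (W \ S) * φ (e S) := by
              have : y (W \ S) = η (W \ S) * φ (e (W \ (W \ S))) := if_pos ⟨hPS, hck⟩
              rwa [Finset.sdiff_sdiff_eq_self hSW] at this
            have h2 : φ (e S) = η (W \ S) * bdry K u (W \ S) := by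
              rw [hcon _ hPS, h1, ← mul_assoc, hη, one_mul]
            rw [h2, bdry_apply, Finset.mul_sum, Finset.mul_sum]
            symm
            refine Finset.sum_subset_zero_on_sdiff ?_ ?_ ?_
            · intro l hl
              simp [hl]
            · intro l hl
              simp only [Finset.mem_sdiff, Finset.mem_compl, not_and, not_not] at hl
              rw [hu.eq_zero]
              · simp
              · intro h
                exact hl.2 (hl.1 (hP _ h (Finset.mem_insert_self _ _)))
            · intro l hl
              ring
      _ = ∑ S, ∑ l ∈ Sᶜ, z (insert l S) * η (W \ insert l S) * ksgn K (W \ insert l S) l *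
            u (insert l (W \ insert l S)) := sum_mem_eq_sum_insert _
      _ = ∑ S, u (W \ S) * η (W \ S) * bdry K z S := by
            refine Finset.sum_congr rfl fun S _ => ?_
            rw [bdry_apply, Finset.mul_sum]
            refine Finset.sum_congr rfl fun l hl => ?_
            have hlS : l ∉ S := by simpa using hl
            by_cases hzS : z (insert l S) = 0
            · simp [hzS]
            have hSW := ((hQ _).1 (hz _ hzS).1).1
            have hlW : l ∈ W := hSW (Finset.mem_insert_self _ _)
            have hS : S ⊆ W := (Finset.subset_insert _ _).trans hSW
            have hset : insert l (W \ insert l S) = W \ S := by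
              rw [Finset.sdiff_insert, Finset.insert_erase (by simp [hlW, hlS])]
            rw [hset]
            have h1 : η (W \ S) = ksgn K W l * η (W \ insert l S) := by
              rw [← hset]
              exact hηi _ _ (by simp)
            have h2 : ksgn K (W \ insert l S) l = ksgn K (W \ S) l := by
              rw [Finset.sdiff_insert, ksgn_erase]
            rw [h1, h2, ← ksgn_sdiff K hS l]
            linear_combination (-(z (insert l S) * η (W \ insert l S) * ksgn K (W \ S) l *
              u (W \ S))) * ksgn_mul_self K S l
      _ = 0 := by
            refine Finset.sum_eq_zero fun S _ => ?_
            by_cases hu0 : u (W \ S) = 0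
            · simp [hu0]
            by_cases hS : S ⊆ W
            · rw [hc S ((hQ S).2 ⟨hS, (hu _ hu0).1⟩), mul_zero]
            · rw [show bdry K z S = 0 by
                by_contra h
                obtain ⟨l, _, h, _⟩ := bdry_supp hz h
                exact hS ((Finset.subset_insert _ _).trans ((hQ _).1 h).1), mul_zero]

lemma NZ_compl_iff {K : Type*} [Field K] {n : ℕ} {P Q : Finset (Fin n) → Prop}
    (W : Finset (Fin n)) (hP : ∀ T, P T → T ⊆ W) (hQ : ∀ S, Q S ↔ S ⊆ W ∧ P (W \ S)) {i k : ℕ}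
    (hik : i + k = W.card) : NZ K Q i ↔ NZ K P k := by
  refine ⟨NZ.compl W hP hQ hik, NZ.compl W (fun T h => ((hQ T).1 h).1) (fun S => ?_)
    (by omega)⟩
  refine ⟨fun h => ⟨hP S h, (hQ _).2 ⟨Finset.sdiff_subset, ?_⟩⟩, fun h => ?_⟩
  · rwa [Finset.sdiff_sdiff_eq_self (hP S h)]
  · rw [hQ, Finset.sdiff_sdiff_eq_self h.1] at h
    exact h.2.2

/-- A family stable under adding and removing `l` is a cone, hence acyclic. -/
lemma not_NZ_of_cone {K : Type*} [Field K] {n : ℕ} {P : Finset (Fin n) → Prop} (l : Fin n)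
    (hP : ∀ T, l ∉ T → (P (insert l T) ↔ P T)) (k : ℕ) : ¬ NZ K P k := by
  classical
  rintro ⟨z, hz, hc, hb⟩
  obtain ⟨T, hT, hne⟩ := hb (fun S => if l ∈ S then ksgn K (S.erase l) l * z (S.erase l) else 0) (by
    intro S hS
    beta_reduce at hS
    by_cases hl : l ∈ S
    · rw [if_pos hl] at hS
      obtain ⟨h1, h2⟩ := hz _ (right_ne_zero_of_mul hS)
      rw [← hP _ (Finset.notMem_erase _ _), Finset.insert_erase hl] at h1
      rw [Finset.card_erase_of_mem hl] at h2
      have := Finset.card_pos.2 ⟨l, hl⟩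
      exact ⟨h1, by omega⟩
    · simp [hl] at hS)
  apply hne
  rw [bdry_apply]
  by_cases hl : l ∈ T
  · obtain ⟨T, hlT, rfl⟩ : ∃ T', l ∉ T' ∧ T = insert l T' :=
      ⟨T.erase l, Finset.notMem_erase _ _, (Finset.insert_erase hl).symm⟩
    have h0 := hc T ((hP T hlT).1 hT)
    rw [bdry_apply, ← Finset.insert_erase (show l ∈ Tᶜ by simpa using hlT),
      Finset.sum_insert (Finset.notMem_erase _ _), ← Finset.compl_insert] at h0
    have h1 : ∀ m ∈ (insert l T)ᶜ, (ksgn K (insert l T) m *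
        if l ∈ insert m (insert l T) then ksgn K ((insert m (insert l T)).erase l) l *
          z ((insert m (insert l T)).erase l) else 0) =
        -(ksgn K T l * (ksgn K T m * z (insert m T))) := by
      intro m hm
      simp only [Finset.mem_compl, Finset.mem_insert, not_or] at hm
      have hlm : l ≠ m := fun h => hm.1 h.symm
      rw [if_pos (by simp), Finset.insert_comm, Finset.erase_insert (by simp [hlT, hlm])]
      have h2 := ksgn_anticomm K hlT hm.2 hlm
      have h3 := ksgn_mul_self K T l
      have h4 := ksgn_mul_self K T m
      linear_combination (z (insert m T) * ksgn K (insert m T) l * ksgn K T l) * h2 -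
        (z (insert m T) * ksgn K (insert m T) l * ksgn K (insert l T) m) * h3 -
        (z (insert m T) * ksgn K T l * ksgn K T m) * ksgn_mul_self K (insert m T) l
    rw [Finset.sum_congr rfl h1, Finset.sum_neg_distrib, ← Finset.mul_sum]
    linear_combination (-ksgn K T l) * h0 + z (insert l T) * ksgn_mul_self K T l
  · rw [Finset.sum_eq_single l]
    · rw [if_pos (Finset.mem_insert_self _ _), Finset.erase_insert hl, ← mul_assoc,
        ksgn_mul_self, one_mul]
    · intro m hm hml
      rw [if_neg (by simp [hl, hml.symm]), mul_zero]
    · intro h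
      simp [hl] at h

/-! ### From Koszul homology to chains on finite sets -/

/-- The exponent of the squarefree monomial `∏_{l ∈ S} x_l`. -/
noncomputable def ind {n : ℕ} (S : Finset (Fin n)) : Fin n →₀ ℕ :=
  Finsupp.equivFunOnFinite.symm fun l => if l ∈ S then 1 else 0

lemma ind_apply {n : ℕ} (S : Finset (Fin n)) (l : Fin n) : ind S l = if l ∈ S then 1 else 0 := rfl

lemma degree_ind {n : ℕ} (S : Finset (Fin n)) : (ind S).degree = S.card := by
  rw [Finsupp.degree_eq_sum]
  simp [ind_apply]

lemma sub_ind_add {n : ℕ} {a : Fin n →₀ ℕ} {S : Finset (Fin n)} (h : S ⊆ a.support) :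
    a - ind S + ind S = a := by
  ext l
  have := @h l
  simp only [Finsupp.mem_support_iff] at this
  simp only [Finsupp.add_apply, Finsupp.tsub_apply, ind_apply]
  split_ifs with hl
  · have := this hl
    omega
  · omega

lemma degree_sub_ind {n : ℕ} {a : Fin n →₀ ℕ} {S : Finset (Fin n)} (h : S ⊆ a.support) :
    (a - ind S).degree + S.card = a.degree := by
  conv_rhs => rw [← sub_ind_add h, map_add, degree_ind]

lemma support_ind {n : ℕ} (W : Finset (Fin n)) : (ind W).support = W := by
  ext l
  simp [ind_apply]

lemma support_ind_sub {n : ℕ} (W S : Finset (Fin n)) : (ind W - ind S).support = W \ S := by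
  ext l
  simp only [Finsupp.mem_support_iff, Finsupp.tsub_apply, ind_apply, Finset.mem_sdiff]
  split_ifs <;> simp_all

/-- A monomial structure on the graded pieces `V k ⊆ M`, which behave like the spans of the
degree-`k` monomials whose support satisfies `Q`: `c m` is the coefficient of the monomial with
exponent `m`, and `b m` is that monomial viewed in `M`. Where `Q m.support` fails, `b m` is
unconstrained, and `c m` vanishes on every `V k`. -/
structure MonomialGrading (K : Type*) [Field K] (n : ℕ) (M : Type*) [AddCommGroup M]
    [Module (MvPolynomial (Fin n) K) M] [Module K M]
    (Q : Finset (Fin n) → Prop) (V : ℤ → Submodule K M)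
    (c : (Fin n →₀ ℕ) → M →ₗ[K] K) (b : (Fin n →₀ ℕ) → M) : Prop where
  c_supp : ∀ k p, p ∈ V k → ∀ m, c m p ≠ 0 → Q m.support ∧ (m.degree : ℤ) = k
  c_inj : ∀ k p, p ∈ V k → (∀ m, c m p = 0) → p = 0
  b_mem : ∀ m : Fin n →₀ ℕ, Q m.support → b m ∈ V m.degree
  c_b_self : ∀ m, Q m.support → c m (b m) = 1
  c_b_ne : ∀ m m', m ≠ m' → Q m'.support → c m (b m') = 0
  X_mem : ∀ k p l, p ∈ V k → (X l : MvPolynomial (Fin n) K) • p ∈ V (k + 1)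
  c_X : ∀ k p l m, p ∈ V k → m l ≠ 0 → Q m.support →
    c m ((X l : MvPolynomial (Fin n) K) • p) = c (m - Finsupp.single l 1) p
  c_X_zero : ∀ k p l m, p ∈ V k → (m l = 0 ∨ ¬ Q m.support) →
    c m ((X l : MvPolynomial (Fin n) K) • p) = 0

/-- The sets `S` for which `e_S` times an active monomial has multidegree `a`. -/
def mfam {n : ℕ} (Q : Finset (Fin n) → Prop) (a : Fin n →₀ ℕ) (S : Finset (Fin n)) : Prop :=
  S ⊆ a.support ∧ Q (a - ind S).support

/-- The component of multidegree `a` of an element of the Koszul complex. -/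
noncomputable def mcomp {K : Type*} [Field K] {n : ℕ} {M : Type*} [AddCommGroup M] [Module K M]
    (c : (Fin n →₀ ℕ) → M →ₗ[K] K) (a : Fin n →₀ ℕ) :
    (Finset (Fin n) → M) →ₗ[K] (Finset (Fin n) → K) where
  toFun f S := if S ⊆ a.support then c (a - ind S) (f S) else 0
  map_add' f g := by
    funext S
    by_cases h : S ⊆ a.support <;> simp [h]
  map_smul' r f := by
    funext S
    by_cases h : S ⊆ a.support <;> simp [h]

/-- The element of the Koszul complex concentrated in multidegree `a` with coefficients `w`. -/
noncomputable def mlift {K : Type*} [Field K] {n : ℕ} {M : Type*} [AddCommGroup M] [Module K M]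
    (b : (Fin n →₀ ℕ) → M) (a : Fin n →₀ ℕ) (w : Finset (Fin n) → K) : Finset (Fin n) → M :=
  fun S => w S • b (a - ind S)

section Koszul

set_option linter.unusedSectionVars false

variable {K : Type*} [Field K] {n : ℕ} {M : Type*} [AddCommGroup M]
  [Module (MvPolynomial (Fin n) K) M] [Module K M] [IsScalarTower K (MvPolynomial (Fin n) K) M]
  {Q : Finset (Fin n) → Prop} {V : ℤ → Submodule K M}
  {c : (Fin n →₀ ℕ) → M →ₗ[K] K} {b : (Fin n →₀ ℕ) → M}

lemma mem_koszulPart {i : ℕ} {j : ℤ} {f : Finset (Fin n) → M} :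
    f ∈ koszulPart K n M V i j ↔
      ∀ S : Finset (Fin n), (S.card = i → f S ∈ V (j - i)) ∧ (S.card ≠ i → f S = 0) := by
  constructor
  · intro h S
    have := h S
    split_ifs at this with hS <;> simp [hS, this]
  · intro h S
    split_ifs with hS
    · exact (h S).1 hS
    · exact (h S).2 hS

lemma koszulPart_mem {i : ℕ} {j : ℤ} {f : Finset (Fin n) → M}
    (hf : f ∈ koszulPart K n M V i j) (S : Finset (Fin n)) : f S ∈ V (j - i) := by
  by_cases h : S.card = i
  · exact (mem_koszulPart.1 hf S).1 h
  · rw [(mem_koszulPart.1 hf S).2 h]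
    exact zero_mem _

lemma koszulD_apply (f : Finset (Fin n) → M) (T : Finset (Fin n)) :
    koszulD K n M f T = ∑ l ∈ Tᶜ, ((-1 : ℤ) ^ (T.filter (· < l)).card) •
      ((X l : MvPolynomial (Fin n) K) • f (insert l T)) := rfl

lemma koszulD_mem (H : MonomialGrading K n M Q V c b) {i : ℕ} {j : ℤ} {f : Finset (Fin n) → M}
    (hf : f ∈ koszulPart K n M V i j) (T : Finset (Fin n)) :
    koszulD K n M f T ∈ V (j - i + 1) := by
  rw [koszulD_apply]
  exact sum_mem fun l _ => zsmul_mem (H.X_mem _ _ _ (koszulPart_mem hf _)) _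

lemma koszulD_koszulPart (H : MonomialGrading K n M Q V c b) {i : ℕ} {j : ℤ}
    {f : Finset (Fin n) → M} (hf : f ∈ koszulPart K n M V (i + 1) j) :
    koszulD K n M f ∈ koszulPart K n M V i j := by
  refine mem_koszulPart.2 fun T => ⟨fun _ => ?_, fun hT => ?_⟩
  · have := koszulD_mem H hf T
    rwa [show j - ((i + 1 : ℕ) : ℤ) + 1 = j - i by push_cast; ring] at this
  · rw [koszulD_apply]
    refine Finset.sum_eq_zero fun l hl => ?_
    rw [(mem_koszulPart.1 hf _).2, smul_zero, smul_zero]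
    rw [Finset.card_insert_of_notMem (by simpa using hl)]
    omega

lemma mcomp_supp (H : MonomialGrading K n M Q V c b) {i : ℕ} {j : ℤ}
    {f : Finset (Fin n) → M} (hf : f ∈ koszulPart K n M V i j) (a : Fin n →₀ ℕ) :
    SuppIn (mfam Q a) i (mcomp c a f) := by
  intro S hS
  simp only [mcomp, LinearMap.coe_mk, AddHom.coe_mk] at hS
  split_ifs at hS with h
  · refine ⟨⟨h, (H.c_supp _ _ (koszulPart_mem hf S) _ hS).1⟩, ?_⟩
    by_contra hc
    rw [(mem_koszulPart.1 hf S).2 hc, map_zero] at hS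
    exact hS rfl
  · exact absurd rfl hS

lemma mcomp_degree (H : MonomialGrading K n M Q V c b) {i : ℕ} {j : ℤ}
    {f : Finset (Fin n) → M} (hf : f ∈ koszulPart K n M V i j) {a : Fin n →₀ ℕ}
    (ha : (a.degree : ℤ) ≠ j) : mcomp c a f = 0 := by
  funext S
  by_contra hS
  have hcard := (mcomp_supp H hf a S hS).2
  simp only [mcomp, LinearMap.coe_mk, AddHom.coe_mk] at hS
  split_ifs at hS with h
  · have h1 := (H.c_supp _ _ (koszulPart_mem hf S) _ hS).2
    have h2 := degree_sub_ind h
    omega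
  · exact hS rfl

lemma mcomp_inj (H : MonomialGrading K n M Q V c b) {k : ℤ} {f : Finset (Fin n) → M}
    (hf : ∀ S, f S ∈ V k) (h : ∀ a, mcomp c a f = 0) : f = 0 := by
  funext S
  refine H.c_inj k _ (hf S) fun m => ?_
  have h1 := congrFun (h (m + ind S)) S
  have h2 : S ⊆ (m + ind S).support := by
    intro l hl
    simp [ind_apply, hl]
  simpa [mcomp, h2] using h1

/-- The Koszul differential is, in each multidegree, the truncated simplicial boundary. -/
lemma mcomp_koszulD (H : MonomialGrading K n M Q V c b) {i : ℕ} {j : ℤ}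
    {f : Finset (Fin n) → M} (hf : f ∈ koszulPart K n M V i j) (a : Fin n →₀ ℕ) :
    mcomp c a (koszulD K n M f) = res (mfam Q a) (bdry K (mcomp c a f)) := by
  classical
  funext T
  by_cases hT : T ⊆ a.support
  · have hL : mcomp c a (koszulD K n M f) T = ∑ l ∈ Tᶜ, ksgn K T l *
        c (a - ind T) ((X l : MvPolynomial (Fin n) K) • f (insert l T)) := by
      simp only [mcomp, LinearMap.coe_mk, AddHom.coe_mk, if_pos hT, koszulD_apply, map_sum,
        map_zsmul]
      refine Finset.sum_congr rfl fun l _ => ?_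
      rw [zsmul_eq_mul]
      simp [ksgn]
    rw [hL]
    by_cases hQ : Q (a - ind T).support
    · rw [res, if_pos ⟨hT, hQ⟩, bdry_apply]
      refine Finset.sum_congr rfl fun l hl => ?_
      have hlT : l ∉ T := by simpa using hl
      congr 1
      simp only [mcomp, LinearMap.coe_mk, AddHom.coe_mk]
      have hal : (a - ind T) l = a l := by simp [ind_apply, hlT]
      by_cases hl0 : a l = 0
      · rw [H.c_X_zero _ _ l _ (koszulPart_mem hf _) (Or.inl (hal.trans hl0)), if_neg]
        intro h
        exact absurd hl0 (by simpa using h (Finset.mem_insert_self _ _))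
      · rw [H.c_X _ _ l _ (koszulPart_mem hf _) (by rwa [hal]) hQ, if_pos]
        · congr 2
          ext m
          by_cases hm : m = l
          · subst hm
            simp [ind_apply, hlT]
          · simp [ind_apply, hm]
        · exact Finset.insert_subset (by simpa using hl0) hT
    · rw [res, if_neg fun h => hQ h.2]
      refine Finset.sum_eq_zero fun l _ => ?_
      rw [H.c_X_zero _ _ l _ (koszulPart_mem hf _) (Or.inr hQ), mul_zero]
  · rw [res, if_neg fun h => hT h.1]
    simp [mcomp, hT]

lemma mlift_mem (H : MonomialGrading K n M Q V c b) {i : ℕ} {a : Fin n →₀ ℕ}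
    {w : Finset (Fin n) → K} (hw : SuppIn (mfam Q a) i w) :
    mlift b a w ∈ koszulPart K n M V i a.degree := by
  refine mem_koszulPart.2 fun S => ⟨fun hS => ?_, fun hS => ?_⟩
  · by_cases h0 : w S = 0
    · simp [mlift, h0]
    · obtain ⟨h1, h2⟩ := (hw S h0).1
      refine Submodule.smul_mem _ _ ?_
      have h3 := degree_sub_ind h1
      rw [show (a.degree : ℤ) - i = ((a - ind S).degree : ℕ) by omega]
      exact H.b_mem _ h2
  · have : w S = 0 := by
      by_contra h0
      exact hS (hw S h0).2
    simp [mlift, this]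

lemma mcomp_mlift_self (H : MonomialGrading K n M Q V c b) {i : ℕ} {a : Fin n →₀ ℕ}
    {w : Finset (Fin n) → K} (hw : SuppIn (mfam Q a) i w) : mcomp c a (mlift b a w) = w := by
  funext S
  by_cases h0 : w S = 0
  · simp [mcomp, mlift, h0]
  · obtain ⟨h1, h2⟩ := (hw S h0).1
    simp [mcomp, mlift, h1, H.c_b_self _ h2]

lemma mcomp_mlift_ne (H : MonomialGrading K n M Q V c b) {i : ℕ} {a a' : Fin n →₀ ℕ}
    (ha : a' ≠ a) {w : Finset (Fin n) → K} (hw : SuppIn (mfam Q a) i w) :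
    mcomp c a' (mlift b a w) = 0 := by
  funext S
  by_cases h0 : w S = 0
  · simp [mcomp, mlift, h0]
  · obtain ⟨h1, h2⟩ := (hw S h0).1
    by_cases h : S ⊆ a'.support
    · have : a' - ind S ≠ a - ind S := by
        intro he
        apply ha
        rw [← sub_ind_add h, he, sub_ind_add h1]
      simp [mcomp, mlift, h, H.c_b_ne _ _ this h2]
    · simp [mcomp, h]

lemma finite_V (H : MonomialGrading K n M Q V c b) (k : ℤ) : FiniteDimensional K (V k) := by
  let s : Finset (Fin n →₀ ℕ) := Finset.finsuppAntidiag Finset.univ k.toNat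
  let F : V k →ₗ[K] (s → K) := LinearMap.pi fun m => (c m.1).comp (V k).subtype
  refine Module.Finite.of_injective F ?_
  rw [← LinearMap.ker_eq_bot, LinearMap.ker_eq_bot']
  intro p hp
  refine Subtype.ext (H.c_inj k _ p.2 fun m => ?_)
  by_contra hne
  have hm : m ∈ s := by
    have := (H.c_supp k _ p.2 m hne).2
    rw [Finset.mem_finsuppAntidiag]
    refine ⟨?_, Finset.subset_univ _⟩
    rw [← Finsupp.degree_eq_sum]
    omega
  exact hne (congrFun hp ⟨m, hm⟩)

lemma finite_koszulPart (H : MonomialGrading K n M Q V c b) (i : ℕ) (j : ℤ) :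
    FiniteDimensional K (koszulPart K n M V i j) := by
  have := finite_V H (j - i)
  let F : koszulPart K n M V i j →ₗ[K] (Finset (Fin n) → V (j - i)) :=
    { toFun := fun f S => ⟨f.1 S, koszulPart_mem f.2 S⟩
      map_add' := fun _ _ => rfl
      map_smul' := fun _ _ => rfl }
  refine Module.Finite.of_injective F fun f g h => ?_
  refine Subtype.ext (funext fun S => ?_)
  exact congrArg Subtype.val (congrFun h S)

lemma gradedBetti_ne_zero_iff (H : MonomialGrading K n M Q V c b) (i : ℕ) (j : ℤ) :
    gradedBetti K n M V i j ≠ 0 ↔ ∃ z ∈ koszulPart K n M V i j, koszulD K n M z = 0 ∧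
      ∀ w ∈ koszulPart K n M V (i + 1) j, koszulD K n M w ≠ z := by
  have hfin := finite_koszulPart H i j
  have : FiniteDimensional K
      (LinearMap.ker (koszulD K n M) ⊓ koszulPart K n M V i j : Submodule K _) :=
    Submodule.finiteDimensional_of_le inf_le_right
  unfold gradedBetti
  rw [Ne, Module.finrank_zero_iff, Submodule.Quotient.subsingleton_iff,
    Submodule.comap_subtype_eq_top, SetLike.not_le_iff_exists]
  constructor
  · rintro ⟨z, ⟨h1, h2⟩, h3⟩
    exact ⟨z, h2, h1, fun w hw h => h3 ⟨w, hw, h⟩⟩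
  · rintro ⟨z, h2, h1, h3⟩
    exact ⟨z, ⟨h1, h2⟩, fun ⟨w, hw, h⟩ => h3 w hw h⟩

/-- Koszul homology is multigraded, and the pieces of non-squarefree multidegree are acyclic. -/
lemma gradedBetti_iff_mfam (H : MonomialGrading K n M Q V c b) (i : ℕ) (j : ℤ) :
    gradedBetti K n M V i j ≠ 0 ↔ ∃ a : Fin n →₀ ℕ, (a.degree : ℤ) = j ∧ NZ K (mfam Q a) i := by
  rw [gradedBetti_ne_zero_iff H]
  constructor
  · rintro ⟨z, hz, hc, hb⟩
    by_contra! hcon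
    have hw : ∀ a : Fin n →₀ ℕ, ∃ w, SuppIn (mfam Q a) (i + 1) w ∧
        ((a.degree : ℤ) = j → ∀ T, mfam Q a T → bdry K w T = mcomp c a z T) := by
      intro a
      by_cases ha : (a.degree : ℤ) = j
      · have h1 := hcon a ha
        by_contra! h2
        refine h1 ⟨mcomp c a z, mcomp_supp H hz a, ?_, fun w hw => ?_⟩
        · intro T hT
          have h3 := congrFun (mcomp_koszulD H hz a) T
          rw [hc, map_zero, res, if_pos hT] at h3
          exact h3.symm
        · exact (h2 w hw).2
      · exact ⟨0, fun T h => by simp at h, fun h => absurd h ha⟩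
    choose w hws hwb using hw
    let s : Finset (Fin n →₀ ℕ) := Finset.finsuppAntidiag Finset.univ j.toNat
    have hsdeg : ∀ a : Fin n →₀ ℕ, (a.degree : ℤ) = j → a ∈ s := by
      intro a ha
      rw [Finset.mem_finsuppAntidiag]
      refine ⟨?_, Finset.subset_univ _⟩
      rw [← Finsupp.degree_eq_sum]
      omega
    let t := s.filter fun a => (a.degree : ℤ) = j
    have hyt : ∑ a ∈ t, mlift b a (w a) ∈ koszulPart K n M V (i + 1) j := by
      refine sum_mem fun a ha => ?_
      have := mlift_mem H (hws a)
      rwa [(Finset.mem_filter.1 ha).2] at this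
    refine hb _ hyt (sub_eq_zero.1 (mcomp_inj H (k := j - i) ?_ fun a => ?_))
    · exact fun S => koszulPart_mem (sub_mem (koszulD_koszulPart H hyt) hz) S
    · by_cases ha : (a.degree : ℤ) = j
      · have hat : a ∈ t := Finset.mem_filter.2 ⟨hsdeg a ha, ha⟩
        rw [map_sub, mcomp_koszulD H hyt, map_sum, Finset.sum_eq_single_of_mem a hat
          fun a' _ h => mcomp_mlift_ne H (Ne.symm h) (hws a'), mcomp_mlift_self H (hws a)]
        funext T
        by_cases hT : mfam Q a T
        · simp [res, hT, hwb a ha T hT]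
        · simp [res, hT, (mcomp_supp H hz a).eq_zero hT]
      · exact mcomp_degree H (sub_mem (koszulD_koszulPart H hyt) hz) ha
  · rintro ⟨a, rfl, z, hz, hc, hb⟩
    have hL := mlift_mem H hz
    refine ⟨mlift b a z, hL, ?_, fun w hw he => ?_⟩
    · refine mcomp_inj H (koszulD_mem H hL) fun a' => ?_
      rw [mcomp_koszulD H hL]
      by_cases ha : a' = a
      · subst ha
        rw [mcomp_mlift_self H hz]
        funext T
        by_cases hT : mfam Q a' T
        · simp [res, hT, hc]
        · simp [res, hT]
      · rw [mcomp_mlift_ne H ha hz, map_zero]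
        funext T
        simp [res]
    · obtain ⟨T, hT, hne⟩ := hb _ (mcomp_supp H hw a)
      apply hne
      have := congrFun (mcomp_koszulD H hw a) T
      rw [he, mcomp_mlift_self H hz, res, if_pos hT] at this
      exact this.symm

/-- Nonvanishing of Betti numbers as nonvanishing of the homology of a family of finite sets. This
is a form of Hochster's formula; the squarefree multidegree is `W`. -/
lemma gradedBetti_iff (H : MonomialGrading K n M Q V c b) (i : ℕ) (j : ℤ) :
    gradedBetti K n M V i j ≠ 0 ↔ ∃ (W : Finset (Fin n)) (k : ℕ), (W.card : ℤ) = j ∧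
      i + k = W.card ∧ NZ K (fun T => T ⊆ W ∧ Q T) k := by
  rw [gradedBetti_iff_mfam H]
  have key : ∀ (W : Finset (Fin n)) (k : ℕ), i + k = W.card →
      (NZ K (mfam Q (ind W)) i ↔ NZ K (fun T => T ⊆ W ∧ Q T) k) := by
    intro W k hk
    refine NZ_compl_iff W (fun T h => h.1) (fun S => ?_) hk
    rw [mfam, support_ind, support_ind_sub]
    exact and_congr_right fun _ => (and_iff_right Finset.sdiff_subset).symm
  constructor
  · rintro ⟨a, rfl, h⟩
    have ha : a = ind a.support := by
      by_contra hne
      obtain ⟨l, hl⟩ : ∃ l, 2 ≤ a l := by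
        by_contra! h2
        apply hne
        ext l
        have := h2 l
        simp only [ind_apply, Finsupp.mem_support_iff]
        split_ifs <;> omega
      refine not_NZ_of_cone l (fun T hlT => ?_) i h
      have hs : (a - ind (insert l T)).support = (a - ind T).support := by
        ext m
        simp only [Finsupp.mem_support_iff, Finsupp.tsub_apply, ind_apply, Finset.mem_insert]
        by_cases hm : m = l
        · subst hm
          simp [hlT]
          omega
        · simp [hm]
      rw [mfam, mfam, hs, Finset.insert_subset_iff]
      have : l ∈ a.support := by simp; omega
      tauto
    obtain ⟨S, hS, hSi⟩ := h.exists_mem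
    have hle : i ≤ a.support.card := hSi ▸ Finset.card_le_card hS.1
    refine ⟨a.support, a.support.card - i, ?_, by omega, ?_⟩
    · conv_rhs => rw [ha, degree_ind]
    · rw [ha] at h
      exact (key _ _ (by omega)).1 h
  · rintro ⟨W, k, rfl, hk, h⟩
    exact ⟨ind W, by rw [degree_ind], (key W k hk).2 h⟩

end Koszul

/-! ### Edge ideals and cover ideals -/

lemma mem_edgeIdeal_iff {K : Type*} [Field K] {n : ℕ} (G : SimpleGraph (Fin n))
    (p : MvPolynomial (Fin n) K) : p ∈ edgeIdeal K G ↔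
      ∀ m ∈ p.support, ∃ u v, G.Adj u v ∧ u ∈ m.support ∧ v ∈ m.support := by
  have h : {p : MvPolynomial (Fin n) K | ∃ u v : Fin n, G.Adj u v ∧ p = X u * X v} =
      (fun s => monomial s (1 : K)) '' {s | ∃ u v, G.Adj u v ∧
        s = Finsupp.single u 1 + Finsupp.single v 1} := by
    ext p
    constructor
    · rintro ⟨u, v, h, rfl⟩
      exact ⟨_, ⟨u, v, h, rfl⟩, by simp [X, monomial_mul]⟩
    · rintro ⟨_, ⟨u, v, h, rfl⟩, rfl⟩
      exact ⟨u, v, h, by simp [X, monomial_mul]⟩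
  rw [edgeIdeal, h, mem_ideal_span_monomial_image]
  refine forall₂_congr fun m _ => ?_
  constructor
  · rintro ⟨_, ⟨u, v, h, rfl⟩, hle⟩
    refine ⟨u, v, h, ?_, ?_⟩
    · have := hle u
      simp at this ⊢
      omega
    · have := hle v
      simp at this ⊢
      omega
  · rintro ⟨u, v, h, hu, hv⟩
    refine ⟨_, ⟨u, v, h, rfl⟩, fun l => ?_⟩
    have huv := h.ne
    simp only [Finsupp.mem_support_iff] at hu hv
    simp only [Finsupp.add_apply, Finsupp.single_apply]
    split_ifs with h1 h2 h2
    · exact absurd (h1.trans h2.symm) huv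
    · subst h1; omega
    · subst h2; omega
    · omega

lemma mem_coverIdeal_iff {K : Type*} [Field K] {n : ℕ} (G : SimpleGraph (Fin n))
    (p : MvPolynomial (Fin n) K) : p ∈ coverIdeal K G ↔
      ∀ m ∈ p.support, ¬ ∃ u v, G.Adj u v ∧ u ∉ m.support ∧ v ∉ m.support := by
  simp only [coverIdeal, Submodule.mem_iInf]
  have h : ∀ u v : Fin n, p ∈ Ideal.span {(X u : MvPolynomial (Fin n) K), X v} ↔
      ∀ m ∈ p.support, m u ≠ 0 ∨ m v ≠ 0 := by
    intro u v
    rw [← Set.image_pair, mem_ideal_span_X_image]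
    simp
  simp only [h]
  constructor
  · rintro h m hm ⟨u, v, ha, hu, hv⟩
    have := h u v ha m hm
    simp only [Finsupp.mem_support_iff, not_not] at hu hv
    tauto
  · intro h u v ha m hm
    by_contra! hc
    exact h m hm ⟨u, v, ha, by simpa using hc.1, by simpa using hc.2⟩

lemma coeff_X_mul_ne {K : Type*} [Field K] {n : ℕ} (p : MvPolynomial (Fin n) K) (l : Fin n)
    (m : Fin n →₀ ℕ) : coeff m (X l * p) = if m l ≠ 0 then coeff (m - Finsupp.single l 1) p
      else 0 := by
  classical
  rw [coeff_X_mul']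
  simp

lemma degree_eq_of_coeff {K : Type*} [Field K] {n : ℕ} {p : MvPolynomial (Fin n) K} {k : ℕ}
    (hp : p ∈ homogeneousSubmodule (Fin n) K k) {m : Fin n →₀ ℕ} (h : coeff m p ≠ 0) :
    m.degree = k := by
  by_contra hne
  exact h (((mem_homogeneousSubmodule _ _).1 hp).coeff_eq_zero hne)

open Classical in
/-- An ideal consisting of all polynomials whose monomials have support in the upward closed
family `U` has a monomial structure. -/
lemma monomialGrading_ideal {K : Type*} [Field K] {n : ℕ} {I : Ideal (MvPolynomial (Fin n) K)}
    {U : Finset (Fin n) → Prop} (hU : ∀ S T, U S → S ⊆ T → U T)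
    (hI : ∀ p, p ∈ I ↔ ∀ m ∈ p.support, U m.support) :
    MonomialGrading K n (MvPolynomial (Fin n) K) U (idealGrading K n I)
      (fun m => lcoeff K m) (fun m => monomial m 1) := by
  have hV : ∀ k p, p ∈ idealGrading K n I k → 0 ≤ k ∧ p ∈ I ∧
      p ∈ homogeneousSubmodule (Fin n) K k.toNat ∨ p = 0 := by
    intro k p hp
    unfold idealGrading at hp
    split_ifs at hp with hk
    · exact Or.inl ⟨hk, hp.1, hp.2⟩
    · exact Or.inr ((Submodule.mem_bot K).1 hp)
  refine ⟨?_, ?_, ?_, ?_, ?_, ?_, ?_, ?_⟩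
  · intro k p hp m hm
    rw [lcoeff_apply] at hm
    rcases hV k p hp with ⟨hk, h1, h2⟩ | rfl
    · refine ⟨(hI p).1 h1 m (mem_support_iff.2 hm), ?_⟩
      have := degree_eq_of_coeff h2 hm
      omega
    · simp at hm
  · intro k p _ h
    ext m
    simpa using h m
  · intro m hm
    unfold idealGrading
    rw [if_pos (by positivity)]
    refine ⟨(hI _).2 fun m' hm' => ?_, ?_⟩
    · have := support_monomial_subset hm'
      rw [Finset.mem_singleton] at this
      exact this ▸ hm
    · exact isHomogeneous_monomial _ (by simp)
  · intro m _
    simp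
  · intro m m' h _
    simp [coeff_monomial, Ne.symm h]
  · intro k p l hp
    rcases hV k p hp with ⟨hk, h1, h2⟩ | rfl
    · unfold idealGrading
      rw [if_pos (by omega)]
      refine ⟨I.mul_mem_left _ h1, ?_⟩
      rw [show (k + 1).toNat = 1 + k.toNat by omega]
      exact (isHomogeneous_X K l).mul h2
    · simp
  · intro k p l m _ hl _
    rw [lcoeff_apply, lcoeff_apply, smul_eq_mul, coeff_X_mul_ne, if_pos hl]
  · intro k p l m hp h
    rw [lcoeff_apply, smul_eq_mul, coeff_X_mul_ne]
    split_ifs with hl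
    · by_contra hne
      rcases hV k p hp with ⟨hk, h1, h2⟩ | rfl
      · rcases h with h | h
        · exact hl h
        · exact h (hU _ _ ((hI p).1 h1 _ (mem_support_iff.2 hne))
            (Finsupp.support_mono tsub_le_self))
      · simp at hne
    · rfl

open Classical in
/-- The coefficient of an exponent `m` on `R/J`, for an ideal `J` consisting of all polynomials
whose monomials have support outside `Q`. It is the zero functional when `x^m ∈ J`. -/
noncomputable def quotCoeff {K : Type*} [Field K] {n : ℕ} {J : Ideal (MvPolynomial (Fin n) K)}
    {Q : Finset (Fin n) → Prop} (hJ : ∀ p, p ∈ J ↔ ∀ m ∈ p.support, ¬ Q m.support)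
    (m : Fin n →₀ ℕ) : (MvPolynomial (Fin n) K ⧸ J) →ₗ[K] K :=
  ((J.restrictScalars K).liftQ (if Q m.support then lcoeff K m else 0) (by
    intro p hp
    rw [LinearMap.mem_ker]
    split_ifs with h
    · rw [lcoeff_apply]
      by_contra hne
      exact (hJ p).1 hp m (mem_support_iff.2 hne) h
    · rfl)).comp (Submodule.Quotient.restrictScalarsEquiv K J).symm.toLinearMap

open Classical in
lemma quotCoeff_mk {K : Type*} [Field K] {n : ℕ} {J : Ideal (MvPolynomial (Fin n) K)}
    {Q : Finset (Fin n) → Prop} (hJ : ∀ p, p ∈ J ↔ ∀ m ∈ p.support, ¬ Q m.support)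
    (m : Fin n →₀ ℕ) (p : MvPolynomial (Fin n) K) :
    quotCoeff hJ m (J.mkQ p) = if Q m.support then coeff m p else 0 := by
  have : quotCoeff hJ m (J.mkQ p) =
      (if Q m.support then lcoeff K m else 0 : MvPolynomial (Fin n) K →ₗ[K] K) p := rfl
  rw [this]
  split_ifs <;> simp

lemma monomialGrading_quot {K : Type*} [Field K] {n : ℕ} {J : Ideal (MvPolynomial (Fin n) K)}
    {Q : Finset (Fin n) → Prop} (hQ : ∀ S T, Q T → S ⊆ T → Q S)
    (hJ : ∀ p, p ∈ J ↔ ∀ m ∈ p.support, ¬ Q m.support) :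
    MonomialGrading K n (MvPolynomial (Fin n) K ⧸ J) Q (quotGrading K n J)
      (quotCoeff hJ) (fun m => J.mkQ (monomial m 1)) := by
  classical
  have hV : ∀ k p, p ∈ quotGrading K n J k → ∃ q, p = J.mkQ q ∧ (0 ≤ k ∧
      q ∈ homogeneousSubmodule (Fin n) K k.toNat ∨ q = 0) := by
    intro k p hp
    unfold quotGrading at hp
    split_ifs at hp with hk
    · obtain ⟨q, hq, rfl⟩ := hp
      exact ⟨q, rfl, Or.inl ⟨hk, hq⟩⟩
    · exact ⟨0, by rw [(Submodule.mem_bot K).1 hp, map_zero], Or.inr rfl⟩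
  have hX : ∀ (l : Fin n) (q : MvPolynomial (Fin n) K),
      (X l : MvPolynomial (Fin n) K) • J.mkQ q = J.mkQ (X l * q) := fun l q => by
    rw [← map_smul, smul_eq_mul]
  refine ⟨?_, ?_, ?_, ?_, ?_, ?_, ?_, ?_⟩
  · intro k p hp m hm
    obtain ⟨q, rfl, h⟩ := hV k p hp
    rw [quotCoeff_mk] at hm
    split_ifs at hm with hs
    · rcases h with ⟨hk, h⟩ | rfl
      · have := degree_eq_of_coeff h hm
        exact ⟨hs, by omega⟩
      · simp at hm
    · exact absurd rfl hm
  · intro k p hp h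
    obtain ⟨q, rfl, -⟩ := hV k p hp
    rw [Submodule.mkQ_apply, Submodule.Quotient.mk_eq_zero, hJ]
    intro m hm hs
    have := h m
    rw [quotCoeff_mk, if_pos hs] at this
    exact mem_support_iff.1 hm this
  · intro m _
    unfold quotGrading
    rw [if_pos (by positivity)]
    exact ⟨monomial m 1, isHomogeneous_monomial _ (by simp), rfl⟩
  · intro m hm
    rw [quotCoeff_mk, if_pos hm]
    simp
  · intro m m' h _
    rw [quotCoeff_mk]
    simp [coeff_monomial, Ne.symm h]
  · intro k p l hp
    obtain ⟨q, rfl, h⟩ := hV k p hp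
    rw [hX]
    rcases h with ⟨hk, h⟩ | rfl
    · unfold quotGrading
      rw [if_pos (by omega)]
      refine ⟨X l * q, ?_, rfl⟩
      rw [show (k + 1).toNat = 1 + k.toNat by omega]
      exact (isHomogeneous_X K l).mul h
    · simp
  · intro k p l m hp hl hm
    obtain ⟨q, rfl, -⟩ := hV k p hp
    rw [hX, quotCoeff_mk, quotCoeff_mk, if_pos hm,
      if_pos (hQ _ _ hm (Finsupp.support_mono tsub_le_self)), coeff_X_mul_ne, if_pos hl]
  · intro k p l m hp h
    obtain ⟨q, rfl, -⟩ := hV k p hp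
    rw [hX, quotCoeff_mk, coeff_X_mul_ne]
    rcases h with h | h <;> simp [h]

/-- For a graph `G` on `{1,…,n}` with at least one edge,
`pd(R/J(G)) = reg(I(G))`. -/
theorem pd_coverIdeal_eq_reg_edgeIdeal (K : Type*) [Field K] (n : ℕ)
    (G : SimpleGraph (Fin n)) (hG : G.edgeSet.Nonempty) :
    (pdQuot K n (coverIdeal K G) : ℤ) = regIdeal K n (edgeIdeal K G) := by
  let U : Finset (Fin n) → Prop := fun S => ∃ u v, G.Adj u v ∧ u ∈ S ∧ v ∈ S
  let Q : Finset (Fin n) → Prop := fun S => ∃ u v, G.Adj u v ∧ u ∉ S ∧ v ∉ S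
  have hU : ∀ S T, U S → S ⊆ T → U T := fun S T ⟨u, v, h, hu, hv⟩ hST =>
    ⟨u, v, h, hST hu, hST hv⟩
  have hQ : ∀ S T, Q T → S ⊆ T → Q S := fun S T ⟨u, v, h, hu, hv⟩ hST =>
    ⟨u, v, h, fun h => hu (hST h), fun h => hv (hST h)⟩
  have hne : ∃ S, U S := by
    obtain ⟨e, he⟩ := hG
    induction e using Sym2.ind with
    | _ u v => exact ⟨Finset.univ, u, v, he, Finset.mem_univ _, Finset.mem_univ _⟩
  obtain ⟨m, hpd, hreg⟩ := exists_max (K := K) hU hne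
  have h1 : {i : ℕ | ∃ j : ℤ, bettiQuot K n (coverIdeal K G) i j ≠ 0} =
      {i | ∃ A : Finset (Fin n), NZ K (fun T => A ⊆ T ∧ U T) (A.card + i)} := by
    ext i
    simp only [Set.mem_ofPred_eq, bettiQuot,
      gradedBetti_iff (monomialGrading_quot hQ (mem_coverIdeal_iff G))]
    -- Complementation in the whole vertex set exchanges non-covers inside `W` with sets
    -- containing `Wᶜ` and an edge.
    have key : ∀ (A : Finset (Fin n)) (k : ℕ), i + k = Aᶜ.card →
        (NZ K (fun T => A ⊆ T ∧ U T) (A.card + i) ↔ NZ K (fun T => T ⊆ Aᶜ ∧ Q T) k) := by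
      intro A k hk
      refine NZ_compl_iff Finset.univ (fun T _ => Finset.subset_univ T) (fun S => ?_) ?_
      · have h1 : Finset.univ \ S ⊆ Aᶜ ↔ A ⊆ S := by
          rw [← Finset.compl_eq_univ_sdiff, Finset.compl_subset_compl]
        have h2 : Q (Finset.univ \ S) ↔ U S := by simp [Q, U]
        rw [h1, h2]
        simp
      · have := Finset.card_add_card_compl A
        rw [Finset.card_univ]
        omega
    constructor
    · rintro ⟨j, W, k, -, hk, h⟩
      exact ⟨Wᶜ, (key Wᶜ k (by rwa [compl_compl])).2 (by rwa [compl_compl])⟩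
    · rintro ⟨A, h⟩
      obtain ⟨T, -, hT⟩ := h.exists_mem
      have h3 : A.card + i ≤ n := by
        rw [← hT]
        simpa using T.card_le_univ
      have h4 := Finset.card_add_card_compl A
      rw [Fintype.card_fin] at h4
      have hk : i + (Aᶜ.card - i) = Aᶜ.card := by omega
      exact ⟨_, Aᶜ, _, rfl, hk, (key A _ hk).1 h⟩
  have h2 : {d : ℤ | ∃ (i : ℕ) (j : ℤ), bettiIdeal K n (edgeIdeal K G) i j ≠ 0 ∧
      d = j - (i : ℤ)} =
      (Nat.cast : ℕ → ℤ) '' {i | ∃ W : Finset (Fin n), NZ K (fun T => T ⊆ W ∧ U T) i} := by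
    ext d
    simp only [Set.mem_ofPred_eq, bettiIdeal, Set.mem_image,
      gradedBetti_iff (monomialGrading_ideal hU (mem_edgeIdeal_iff G))]
    constructor
    · rintro ⟨i, j, ⟨W, k, rfl, hk, h⟩, rfl⟩
      exact ⟨k, ⟨W, h⟩, by omega⟩
    · rintro ⟨k, ⟨W, h⟩, rfl⟩
      obtain ⟨T, hT, hTk⟩ := h.exists_mem
      have hle : k ≤ W.card := hTk ▸ Finset.card_le_card hT.1
      exact ⟨W.card - k, W.card, ⟨W, k, rfl, by omega, h⟩, by omega⟩
  have h3 : IsGreatest ((Nat.cast : ℕ → ℤ) ''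
      {i | ∃ W : Finset (Fin n), NZ K (fun T => T ⊆ W ∧ U T) i}) m := by
    refine ⟨⟨m, hreg.1, rfl⟩, ?_⟩
    rintro _ ⟨i, hi, rfl⟩
    exact_mod_cast hreg.2 hi
  rw [pdQuot, regIdeal, h1, h2, hpd.csSup_eq, h3.csSup_eq]
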